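/- A family of Killing graphs X(t,x) = ϑ(u(x,t),x) evolves by the flow ∂X/∂t = (nH − 𝓗)N if and only if u satisfies the quasilinear parabolic equation ∂u/∂t = W div(∇u/W) − W𝓗 − γ⟨∇̄_Y Y, ∇u⟩, equivalently ∂u/∂t = (σ^{ij} − u^i u^j/W²) u_{i;j} − ((2γ + |∇u|²)/W²)⟨∇γ/(2γ), ∇u⟩ − W𝓗; indeed nH − 𝓗 = ⟨∂X/∂t, N⟩ = (1/W)∂u/∂t. -/

import Mathlib

/-!
Formalization of the setting of "Mean curvature flow of Killing graphs"
(Lira–Wanderley).  The integral leaf `P` of the distribution orthogonal to the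
Killing field `Y` is presented in coordinates as `ℝⁿ` (points `Fin n → ℝ`)
carrying a Riemannian metric `σ`; the ambient manifold is the warped product
`M = P ×_{1/√γ} ℝ` with coordinates `(x⁰ = s, x)` and metric
`ḡ = σ + (1/γ) ds²`, where `γ = 1/|Y|²` and `Y = ∂/∂x⁰`.  All geometric
quantities (Christoffel symbols, second fundamental form and mean curvature of
a Killing graph, ambient Ricci curvature, …) are defined concretely from this
data.
-/

noncomputable section

open Real MeasureTheory Filter Topology

namespace KMCF

variable {n : ℕ}

/-- Partial derivative of a function on the coordinate chart of the leaf `P`. -/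
def pd (f : (Fin n → ℝ) → ℝ) (i : Fin n) (x : Fin n → ℝ) : ℝ :=
  fderiv ℝ f x (Pi.single i 1)

/-- Component of an ambient tangent vector `(v⁰, vⁱ)` of `M = P ×_{1/√γ} ℝ`. -/
def vComp (v : ℝ × (Fin n → ℝ)) (a : Fin (n + 1)) : ℝ :=
  if ha : a = 0 then v.1 else v.2 (a.pred ha)

/-- Ambient partial derivative (nothing depends on the flow parameter `x⁰`). -/
def ambPd (f : (Fin n → ℝ) → ℝ) (a : Fin (n + 1)) (x : Fin n → ℝ) : ℝ :=
  if ha : a = 0 then 0 else pd f (a.pred ha) x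

/-- Coordinate tangent vectors `X_* ∂_i = ∂_i + u_i ∂_0` of the Killing graph
`X(x) = ϑ(u(x), x)`. -/
def tangentV (u : (Fin n → ℝ) → ℝ) (i : Fin n) (x : Fin n → ℝ) : ℝ × (Fin n → ℝ) :=
  (pd u i x, Pi.single i 1)

/-- Coordinate data of the integral leaf `P`: the metric `σ`, its inverse, and
the warping function `γ = 1/|Y|²` of the Killing field `Y`. -/
structure LeafData (n : ℕ) where
  σ : (Fin n → ℝ) → Fin n → Fin n → ℝ
  σInv : (Fin n → ℝ) → Fin n → Fin n → ℝ
  γ : (Fin n → ℝ) → ℝ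
  σ_symm : ∀ x i j, σ x i j = σ x j i
  σ_posdef : ∀ x (v : Fin n → ℝ), v ≠ 0 → 0 < ∑ i, ∑ j, σ x i j * v i * v j
  σInv_mul_σ : ∀ x i j, (∑ k, σInv x i k * σ x k j) = if i = j then (1 : ℝ) else 0
  σ_smooth : ∀ i j, ContDiff ℝ (⊤ : ℕ∞) fun x => σ x i j
  γ_pos : ∀ x, 0 < γ x
  γ_smooth : ContDiff ℝ (⊤ : ℕ∞) γ

namespace LeafData

variable (D : LeafData n)

/-- Christoffel symbols `Γ^k_{ij}` of the leaf metric `σ`. -/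
def Γc (x : Fin n → ℝ) (i j k : Fin n) : ℝ :=
  (1 / 2) * ∑ l, D.σInv x k l *
    (pd (fun y => D.σ y j l) i x + pd (fun y => D.σ y i l) j x -
      pd (fun y => D.σ y i j) l x)

/-- Covariant Hessian `f_{i;j}` in `P`. -/
def hess (f : (Fin n → ℝ) → ℝ) (i j : Fin n) (x : Fin n → ℝ) : ℝ :=
  pd (pd f j) i x - ∑ k, D.Γc x i j k * pd f k x

/-- Raised gradient components `f^i = σ^{ij} f_j`. -/
def gradUp (f : (Fin n → ℝ) → ℝ) (i : Fin n) (x : Fin n → ℝ) : ℝ :=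
  ∑ j, D.σInv x i j * pd f j x

/-- Inner product `⟨∇f, ∇g⟩` of gradients in `P`. -/
def inner2 (f g : (Fin n → ℝ) → ℝ) (x : Fin n → ℝ) : ℝ :=
  ∑ i, ∑ j, D.σInv x i j * pd f i x * pd g j x

/-- `|∇u|²`. -/
def gradSq (u : (Fin n → ℝ) → ℝ) (x : Fin n → ℝ) : ℝ := D.inner2 u u x

/-- `W = √(γ + |∇u|²)`. -/
def Wf (u : (Fin n → ℝ) → ℝ) (x : Fin n → ℝ) : ℝ :=
  Real.sqrt (D.γ x + D.gradSq u x)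

/-- Divergence in `P` of a vector field with raised components `Z^i`. -/
def divP (Z : Fin n → (Fin n → ℝ) → ℝ) (x : Fin n → ℝ) : ℝ :=
  ∑ i, (pd (Z i) i x + ∑ k, D.Γc x i k i * Z k x)

/-- Divergence in the ambient warped product `M = P ×_{1/√γ} ℝ` of an
`s`-independent horizontal vector field (`Γ̄⁰_{0i} = −γ_i/(2γ)`). -/
def divM (Z : Fin n → (Fin n → ℝ) → ℝ) (x : Fin n → ℝ) : ℝ :=
  D.divP Z x - ∑ i, (pd D.γ i x / (2 * D.γ x)) * Z i x

/-- The ambient warped-product metric `ḡ` of `M` in the coordinates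
`(x⁰ = s, x)`:  `ḡ₀₀ = 1/γ`, `ḡ₀ᵢ = 0`, `ḡᵢⱼ = σᵢⱼ`. -/
def ambG (x : Fin n → ℝ) (a b : Fin (n + 1)) : ℝ :=
  if ha : a = 0 then (if b = 0 then 1 / D.γ x else 0)
  else if hb : b = 0 then 0 else D.σ x (a.pred ha) (b.pred hb)

/-- The inverse ambient metric. -/
def ambGInv (x : Fin n → ℝ) (a b : Fin (n + 1)) : ℝ :=
  if ha : a = 0 then (if b = 0 then D.γ x else 0)
  else if hb : b = 0 then 0 else D.σInv x (a.pred ha) (b.pred hb)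

/-- Ambient Christoffel symbols `Γ̄^a_{bc}` of the warped-product metric. -/
def ambΓ (x : Fin n → ℝ) (a b c : Fin (n + 1)) : ℝ :=
  (1 / 2) * ∑ e, D.ambGInv x a e *
    (ambPd (fun y => D.ambG y b e) c x + ambPd (fun y => D.ambG y c e) b x -
      ambPd (fun y => D.ambG y b c) e x)

/-- Ambient curvature tensor `R̄^a_{bcd}`. -/
def ambRiem (x : Fin n → ℝ) (a b c d : Fin (n + 1)) : ℝ :=
  ambPd (fun y => D.ambΓ y a d b) c x - ambPd (fun y => D.ambΓ y a c b) d x +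
    (∑ e, D.ambΓ x a c e * D.ambΓ x e d b) -
    ∑ e, D.ambΓ x a d e * D.ambΓ x e c b

/-- Ambient Ricci curvature as a bilinear form on tangent vectors of `M`. -/
def Ric (x : Fin n → ℝ) (v w : ℝ × (Fin n → ℝ)) : ℝ :=
  ∑ b, ∑ c, (∑ a, D.ambRiem x a b a c) * vComp v b * vComp w c

/-- The ambient Riemannian inner product `⟨·,·⟩` at `x`. -/
def ambInner (x : Fin n → ℝ) (v w : ℝ × (Fin n → ℝ)) : ℝ :=
  ∑ a, ∑ b, D.ambG x a b * vComp v a * vComp w b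

/-- Ambient covariant derivative `∇̄_v Z` of an `s`-independent vector field
`Z` in the direction of the tangent vector `v` at `x`. -/
def ambCov (Z : (Fin n → ℝ) → ℝ × (Fin n → ℝ)) (v : ℝ × (Fin n → ℝ))
    (x : Fin n → ℝ) : ℝ × (Fin n → ℝ) :=
  ((∑ i, v.2 i * pd (fun y => (Z y).1) i x) +
      ∑ b, ∑ c, D.ambΓ x 0 b c * vComp v b * vComp (Z x) c,
    fun k =>
      (∑ i, v.2 i * pd (fun y => (Z y).2 k) i x) +
        ∑ b, ∑ c, D.ambΓ x k.succ b c * vComp v b * vComp (Z x) c)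

/-- The unit normal `N = (1/W)(γ Y − ϑ_* ∇u)` of the Killing graph. -/
def normalN (u : (Fin n → ℝ) → ℝ) (x : Fin n → ℝ) : ℝ × (Fin n → ℝ) :=
  (D.γ x / D.Wf u x, fun k => -D.gradUp u k x / D.Wf u x)

/-- Second fundamental form `a_{ij} = ⟨∇̄_{X_*∂_i} X_*∂_j, N⟩` of the graph. -/
def sff (u : (Fin n → ℝ) → ℝ) (i j : Fin n) (x : Fin n → ℝ) : ℝ :=
  D.ambInner x (D.ambCov (fun y => tangentV u j y) (tangentV u i x) x)
    (D.normalN u x)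

/-- Induced metric `g_{ij} = σ_{ij} + u_i u_j / γ` of the graph. -/
def gmet (u : (Fin n → ℝ) → ℝ) (x : Fin n → ℝ) (i j : Fin n) : ℝ :=
  D.σ x i j + pd u i x * pd u j x / D.γ x

/-- Inverse induced metric `g^{ij} = σ^{ij} − u^i u^j / W²`. -/
def gInv (u : (Fin n → ℝ) → ℝ) (x : Fin n → ℝ) (i j : Fin n) : ℝ :=
  D.σInv x i j - D.gradUp u i x * D.gradUp u j x / (D.Wf u x) ^ 2

/-- `n` times the mean curvature of the graph: `nH = g^{ij} a_{ij}`. -/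
def nH (u : (Fin n → ℝ) → ℝ) (x : Fin n → ℝ) : ℝ :=
  ∑ i, ∑ j, D.gInv u x i j * D.sff u i j x

/-- Christoffel symbols of the induced metric of the graph. -/
def Γg (u : (Fin n → ℝ) → ℝ) (x : Fin n → ℝ) (i j k : Fin n) : ℝ :=
  (1 / 2) * ∑ l, D.gInv u x k l *
    (pd (fun y => D.gmet u y j l) i x + pd (fun y => D.gmet u y i l) j x -
      pd (fun y => D.gmet u y i j) l x)

/-- Covariant derivative `∇_k T_{ij}` in `P` of a 2-tensor. -/
def covP2 (T : Fin n → Fin n → (Fin n → ℝ) → ℝ) (k i j : Fin n)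
    (x : Fin n → ℝ) : ℝ :=
  pd (T i j) k x - ∑ l, D.Γc x k i l * T l j x - ∑ l, D.Γc x k j l * T i l x

/-- Covariant derivative `∇^Σ_k T_{ij}` on the graph of a 2-tensor. -/
def covG2 (u : (Fin n → ℝ) → ℝ) (T : Fin n → Fin n → (Fin n → ℝ) → ℝ)
    (k i j : Fin n) (x : Fin n → ℝ) : ℝ :=
  pd (T i j) k x - ∑ l, D.Γg u x k i l * T l j x - ∑ l, D.Γg u x k j l * T i l x

/-- Components of the gradient on `Σ` of a function of `x`. -/
def gradG (u f : (Fin n → ℝ) → ℝ) (j : Fin n) (x : Fin n → ℝ) : ℝ :=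
  ∑ k, D.gInv u x j k * pd f k x

/-- Components, in the basis `X_*∂_i`, of the tangential projection `Y^T`
of the Killing field:  `Y^T = (u^i/W²) X_*∂_i`. -/
def YTc (u : (Fin n → ℝ) → ℝ) (i : Fin n) (x : Fin n → ℝ) : ℝ :=
  D.gradUp u i x / (D.Wf u x) ^ 2

/-- Squared norm `|A|²` of the second fundamental form. -/
def Anorm2 (u : (Fin n → ℝ) → ℝ) (x : Fin n → ℝ) : ℝ :=
  ∑ i, ∑ j, ∑ k, ∑ l,
    D.gInv u x i k * D.gInv u x j l * D.sff u i j x * D.sff u k l x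

/-- Mixed components `a_i^j = g^{jk} a_{ik}` of the Weingarten map. -/
def aMix (u : (Fin n → ℝ) → ℝ) (i j : Fin n) (x : Fin n → ℝ) : ℝ :=
  ∑ k, D.gInv u x j k * D.sff u i k x

/-- Raised spatial components `N^j = −u^j/W` of the unit normal. -/
def NupS (u : (Fin n → ℝ) → ℝ) (j : Fin n) (x : Fin n → ℝ) : ℝ :=
  -D.gradUp u j x / D.Wf u x

/-- The support-type function `θ = ⟨∇d, N⟩`. -/
def theta (u d : (Fin n → ℝ) → ℝ) (x : Fin n → ℝ) : ℝ :=
  D.ambInner x ((0 : ℝ), fun k => D.gradUp d k x) (D.normalN u x)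

/-- `κ = ⟨γ ∇̄_Y Y, ∇d⟩ = ⟨∇γ, ∇d⟩/(2γ)`. -/
def kappa (d : (Fin n → ℝ) → ℝ) (x : Fin n → ℝ) : ℝ :=
  D.inner2 D.γ d x / (2 * D.γ x)

/-- The Korevaar auxiliary function `h = 1 + α d − ϕ ⟨∇d, N⟩`. -/
def hKor (u d ϕ : (Fin n → ℝ) → ℝ) (α : ℝ) (x : Fin n → ℝ) : ℝ :=
  1 + α * d x - ϕ x * D.theta u d x

/-- `η = e^{Ku} h`. -/
def etaKor (u d ϕ : (Fin n → ℝ) → ℝ) (K α : ℝ) (x : Fin n → ℝ) : ℝ :=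
  Real.exp (K * u x) * D.hKor u d ϕ α x

/-- Riemannian integral over `Ω ⊆ P` (density `√(det σ)`). -/
def intP (Ω : Set (Fin n → ℝ)) (f : (Fin n → ℝ) → ℝ) : ℝ :=
  ∫ x in Ω, f x * Real.sqrt (Matrix.det (Matrix.of fun i j => D.σ x i j))

/-- The nonparametric mean curvature flow equation (23):
`u_t = (σ^{ij} − u^i u^j/W²) u_{i;j} − (1/(2γ) + 1/(2W²)) γ^i u_i − W𝓗`. -/
def SolvesFlowOn (Ω : Set (Fin n → ℝ)) (J : Set ℝ) (𝓗 : (Fin n → ℝ) → ℝ)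
    (u : (Fin n → ℝ) → ℝ → ℝ) : Prop :=
  ∀ x ∈ Ω, ∀ t ∈ J,
    deriv (u x) t =
      (∑ i, ∑ j, D.gInv (fun y => u y t) x i j * D.hess (fun y => u y t) i j x) -
        (1 / (2 * D.γ x) + 1 / (2 * (D.Wf (fun y => u y t) x) ^ 2)) *
          D.inner2 D.γ (fun y => u y t) x -
        D.Wf (fun y => u y t) x * 𝓗 x

/-- The divergence form (21) of the flow equation:
`u_t = W div(∇u/W) − W𝓗 − γ⟨∇̄_Y Y, ∇u⟩`. -/
def SolvesFlowDivOn (Ω : Set (Fin n → ℝ)) (J : Set ℝ) (𝓗 : (Fin n → ℝ) → ℝ)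
    (u : (Fin n → ℝ) → ℝ → ℝ) : Prop :=
  ∀ x ∈ Ω, ∀ t ∈ J,
    deriv (u x) t =
      D.Wf (fun y => u y t) x *
          D.divP (fun i y => D.gradUp (fun z => u z t) i y /
            D.Wf (fun z => u z t) y) x -
        D.Wf (fun y => u y t) x * 𝓗 x -
        D.γ x * (D.inner2 D.γ (fun y => u y t) x / (2 * (D.γ x) ^ 2))

/-- The Neumann condition `⟨N, ν⟩ = ϕ` on `∂Ω`. -/
def NeumannOn (Ω : Set (Fin n → ℝ)) (J : Set ℝ) (ν : (Fin n → ℝ) → Fin n → ℝ)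
    (ϕ : (Fin n → ℝ) → ℝ) (u : (Fin n → ℝ) → ℝ → ℝ) : Prop :=
  ∀ x ∈ frontier Ω, ∀ t ∈ J,
    D.ambInner x (D.normalN (fun y => u y t) x) ((0 : ℝ), ν x) = ϕ x

/-- The stationary prescribed mean curvature equation (5) with the prescribed
contact angle condition (6). -/
def SolvesStationary (Ω : Set (Fin n → ℝ)) (ν : (Fin n → ℝ) → Fin n → ℝ)
    (𝓗 ϕ : (Fin n → ℝ) → ℝ) (v : (Fin n → ℝ) → ℝ) : Prop :=
  (∀ x ∈ Ω,
      D.divP (fun i y => D.gradUp v i y / D.Wf v y) x -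
          D.γ x * (D.inner2 D.γ v x / (2 * (D.γ x) ^ 2 * D.Wf v x)) = 𝓗 x) ∧
    ∀ x ∈ frontier Ω, D.ambInner x (D.normalN v x) ((0 : ℝ), ν x) = ϕ x

/-- The translating-soliton equation (41) with Neumann condition (42). -/
def SolvesSoliton (Ω : Set (Fin n → ℝ)) (ν : (Fin n → ℝ) → Fin n → ℝ)
    (𝓗 ϕ : (Fin n → ℝ) → ℝ) (C : ℝ) (v : (Fin n → ℝ) → ℝ) : Prop :=
  (∀ x ∈ Ω,
      D.divP (fun i y => D.gradUp v i y / D.Wf v y) x -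
          D.γ x * (D.inner2 D.γ v x / (2 * (D.γ x) ^ 2 * D.Wf v x)) =
        𝓗 x + C / D.Wf v x) ∧
    ∀ x ∈ frontier Ω, D.ambInner x (D.normalN v x) ((0 : ℝ), ν x) = ϕ x

end LeafData

end KMCF

namespace KMCF

open LeafData

/-!
The normal component of `∂X/∂t = u_t Y` is `u_t / W`, so the flow equation says `u_t = W (nH - 𝓗)`
and everything reduces to computing `W nH`. Contracting the second fundamental form of the graph
with `g^{ij} = σ^{ij} - u^i u^j / W²`, where `g^{ij} u_j = γ u^i / W²`, gives the nonparametric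
expression. For the divergence form, metric compatibility of the Levi-Civita connection gives
`∇_k u^i = σ^{ij} u_{k;j}`; hence `div ∇u = σ^{ij} u_{i;j}` and `∂_k |∇u|² = 2 u^j u_{k;j}`, and
the quotient rule turns `W div(∇u / W)` into `g^{ij} u_{i;j} - ⟨∇γ, ∇u⟩ / (2 W²)`.
-/

section PartialDerivatives

variable {n : ℕ} {f g : (Fin n → ℝ) → ℝ} {x : Fin n → ℝ}

lemma pd_const (c : ℝ) (i : Fin n) : pd (fun _ => c) i x = 0 := by
  simp [pd]

lemma pd_add (hf : DifferentiableAt ℝ f x) (hg : DifferentiableAt ℝ g x) (i : Fin n) :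
    pd (fun y => f y + g y) i x = pd f i x + pd g i x := by
  simp [pd, fderiv_fun_add hf hg]

lemma pd_mul (hf : DifferentiableAt ℝ f x) (hg : DifferentiableAt ℝ g x) (i : Fin n) :
    pd (fun y => f y * g y) i x = pd f i x * g x + f x * pd g i x := by
  simp only [pd, fderiv_fun_mul hf hg, add_apply, smul_apply, smul_eq_mul]
  ring

lemma pd_sum {ι : Type*} [Fintype ι] {F : ι → (Fin n → ℝ) → ℝ}
    (hF : ∀ a, DifferentiableAt ℝ (F a) x) (i : Fin n) :
    pd (fun y => ∑ a, F a y) i x = ∑ a, pd (F a) i x := by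
  simp [pd, fderiv_fun_sum fun a _ => hF a]

lemma pd_sum_mul {ι : Type*} [Fintype ι] {F G : ι → (Fin n → ℝ) → ℝ}
    (hF : ∀ a, DifferentiableAt ℝ (F a) x) (hG : ∀ a, DifferentiableAt ℝ (G a) x) (i : Fin n) :
    pd (fun y => ∑ a, F a y * G a y) i x =
      ∑ a, (pd (F a) i x * G a x + F a x * pd (G a) i x) := by
  rw [pd_sum fun a => (hF a).fun_mul (hG a)]
  exact Finset.sum_congr rfl fun a _ => pd_mul (hF a) (hG a) i

lemma pd_div (hf : DifferentiableAt ℝ f x) (hg : DifferentiableAt ℝ g x) (hgx : g x ≠ 0)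
    (i : Fin n) :
    pd (fun y => f y / g y) i x = pd f i x / g x - f x * pd g i x / g x ^ 2 := by
  have pd_inv : pd (fun y => (g y)⁻¹) i x = -(pd g i x / g x ^ 2) := by
    have h : fderiv ℝ (fun y => (g y)⁻¹) x = _ :=
      ((hasDerivAt_inv hgx).comp_hasFDerivAt x hg.hasFDerivAt).fderiv
    simp [pd, h, div_eq_inv_mul]
  simp only [div_eq_mul_inv, pd_mul hf (hg.fun_inv hgx), pd_inv]
  ring

lemma pd_sqrt (hf : DifferentiableAt ℝ f x) (hfx : f x ≠ 0) (i : Fin n) :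
    pd (fun y => √(f y)) i x = pd f i x / (2 * √(f x)) := by
  simp only [pd, fderiv_sqrt hf hfx, smul_apply, smul_eq_mul]
  ring

lemma differentiableAt_pd (hf : ContDiffAt ℝ 2 f x) (i : Fin n) :
    DifferentiableAt ℝ (pd f i) x :=
  ((hf.fderiv_right (m := 1) le_rfl).differentiableAt one_ne_zero).clm_apply
    (differentiableAt_const _)

end PartialDerivatives

open scoped Matrix.Norms.Operator in
lemma differentiable_matrix_inv_apply {E m : Type*} [NormedAddCommGroup E] [NormedSpace ℝ E]
    [Fintype m] [DecidableEq m] {A : E → Matrix m m ℝ}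
    (hA : ∀ i j, Differentiable ℝ fun x => A x i j) (hunit : ∀ x, IsUnit (A x))
    (i j : m) : Differentiable ℝ fun x => (A x)⁻¹ i j := by
  have hA' : Differentiable ℝ A :=
    differentiable_pi.2 fun i => differentiable_pi.2 fun j => hA i j
  simp only [Matrix.nonsing_inv_eq_ringInverse]
  exact differentiable_pi.1 (differentiable_pi.1 (hA'.inverse hunit) i) j

namespace LeafData

open scoped Matrix

variable {n : ℕ} (D : LeafData n) (f g : (Fin n → ℝ) → ℝ) (x : Fin n → ℝ)

lemma matrix_σInv_mul_σ : Matrix.of (D.σInv x) * Matrix.of (D.σ x) = 1 := by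
  ext i j
  simp [Matrix.mul_apply, D.σInv_mul_σ, Matrix.one_apply]

lemma matrix_σInv_eq_inv : Matrix.of (D.σInv x) = (Matrix.of (D.σ x))⁻¹ :=
  (Matrix.inv_eq_left_inv (D.matrix_σInv_mul_σ x)).symm

lemma σInv_symm (i j : Fin n) : D.σInv x i j = D.σInv x j i := by
  have hσ : (Matrix.of (D.σ x)).IsSymm := Matrix.IsSymm.ext fun i j => D.σ_symm x j i
  have hσInv : (Matrix.of (D.σInv x)).IsSymm := D.matrix_σInv_eq_inv x ▸ hσ.inv
  exact hσInv.apply j i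

lemma sum_mul_sum_σInv_mul_comm (v w : Fin n → ℝ) :
    ∑ i, v i * ∑ j, D.σInv x i j * w j = ∑ i, w i * ∑ j, D.σInv x i j * v j := by
  simp only [Finset.mul_sum]
  rw [Finset.sum_comm]
  refine Finset.sum_congr rfl fun i _ => Finset.sum_congr rfl fun j _ => ?_
  rw [D.σInv_symm x j i]
  ring

lemma sum_σInv_mul_sum_σ_mul (v : Fin n → ℝ) (i : Fin n) :
    ∑ j, D.σInv x i j * ∑ k, D.σ x j k * v k = v i := by
  have h : Matrix.of (D.σInv x) *ᵥ Matrix.of (D.σ x) *ᵥ v = v := by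
    rw [Matrix.mulVec_mulVec, matrix_σInv_mul_σ, Matrix.one_mulVec]
  exact congrFun h i

lemma sum_σ_mul_sum_σInv_mul (v : Fin n → ℝ) (i : Fin n) :
    ∑ j, D.σ x i j * ∑ k, D.σInv x j k * v k = v i := by
  have h : Matrix.of (D.σ x) *ᵥ Matrix.of (D.σInv x) *ᵥ v = v := by
    rw [Matrix.mulVec_mulVec, mul_eq_one_comm.mp (D.matrix_σInv_mul_σ x), Matrix.one_mulVec]
  exact congrFun h i

lemma differentiable_σ (i j : Fin n) : Differentiable ℝ fun y => D.σ y i j :=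
  (D.σ_smooth i j).differentiable (by simp)

lemma differentiable_σInv (i j : Fin n) : Differentiable ℝ fun y => D.σInv y i j := by
  have hσInv : (fun y => D.σInv y i j) = fun y => (Matrix.of (D.σ y))⁻¹ i j :=
    funext fun y => congrFun₂ (D.matrix_σInv_eq_inv y) i j
  rw [hσInv]
  exact differentiable_matrix_inv_apply D.differentiable_σ
    (fun y => .of_mul_eq_one_right _ (D.matrix_σInv_mul_σ y)) i j

lemma differentiable_γ : Differentiable ℝ D.γ :=
  D.γ_smooth.differentiable (by simp)

lemma sum_σ_mul_gradUp (i : Fin n) : ∑ j, D.σ x i j * D.gradUp f j x = pd f i x :=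
  D.sum_σ_mul_sum_σInv_mul x (fun j => pd f j x) i

lemma inner2_eq_sum_pd_mul_gradUp : D.inner2 f g x = ∑ i, pd f i x * D.gradUp g i x := by
  simp only [inner2, gradUp, Finset.mul_sum]
  refine Finset.sum_congr rfl fun i _ => Finset.sum_congr rfl fun j _ => ?_
  ring

lemma inner2_comm : D.inner2 f g x = D.inner2 g f x := by
  rw [inner2_eq_sum_pd_mul_gradUp, inner2_eq_sum_pd_mul_gradUp]
  exact D.sum_mul_sum_σInv_mul_comm x _ _

lemma gradSq_eq_sum_pd_mul_gradUp : D.gradSq f x = ∑ i, pd f i x * D.gradUp f i x :=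
  D.inner2_eq_sum_pd_mul_gradUp f f x

lemma gradSq_nonneg : 0 ≤ D.gradSq f x := by
  have gradSq_eq : D.gradSq f x = ∑ i, ∑ j, D.σ x i j * D.gradUp f i x * D.gradUp f j x := by
    rw [gradSq_eq_sum_pd_mul_gradUp]
    refine Finset.sum_congr rfl fun i _ => ?_
    rw [← sum_σ_mul_gradUp, Finset.sum_mul]
    exact Finset.sum_congr rfl fun j _ => by ring
  rw [gradSq_eq]
  rcases eq_or_ne (fun i => D.gradUp f i x) 0 with hgrad | hgrad
  · simp [funext_iff.1 hgrad]
  · exact (D.σ_posdef x _ hgrad).le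

lemma γ_add_gradSq_pos : 0 < D.γ x + D.gradSq f x :=
  add_pos_of_pos_of_nonneg (D.γ_pos x) (D.gradSq_nonneg f x)

lemma Wf_sq : D.Wf f x ^ 2 = D.γ x + D.gradSq f x :=
  Real.sq_sqrt (D.γ_add_gradSq_pos f x).le

lemma Wf_pos : 0 < D.Wf f x :=
  Real.sqrt_pos.2 (D.γ_add_gradSq_pos f x)

section LeviCivita

lemma sum_σ_mul_Γc (i j k : Fin n) :
    ∑ l, D.σ x k l * D.Γc x i j l =
      1 / 2 * (pd (fun y => D.σ y j k) i x + pd (fun y => D.σ y i k) j x -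
        pd (fun y => D.σ y i j) k x) := by
  rw [← D.sum_σ_mul_sum_σInv_mul x (fun l => pd (fun y => D.σ y j l) i x +
    pd (fun y => D.σ y i l) j x - pd (fun y => D.σ y i j) l x) k, Finset.mul_sum]
  simp only [Γc, mul_left_comm]

lemma pd_σ (i j k : Fin n) :
    pd (fun y => D.σ y i j) k x =
      ∑ l, D.σ x j l * D.Γc x k i l + ∑ l, D.σ x i l * D.Γc x k j l := by
  rw [sum_σ_mul_Γc, sum_σ_mul_Γc]
  simp only [D.σ_symm _ j i]
  ring

variable {f x}

lemma differentiableAt_gradUp (hf : ContDiffAt ℝ 2 f x) (i : Fin n) :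
    DifferentiableAt ℝ (D.gradUp f i) x :=
  .fun_sum fun j _ => (D.differentiable_σInv i j x).fun_mul (differentiableAt_pd hf j)

lemma sum_pd_σ_mul_gradUp (i k : Fin n) :
    ∑ j, pd (fun y => D.σ y i j) k x * D.gradUp f j x =
      ∑ l, D.Γc x k i l * pd f l x + ∑ l, D.σ x i l * ∑ j, D.Γc x k j l * D.gradUp f j x := by
  have lowered : ∑ j, (∑ l, D.σ x j l * D.Γc x k i l) * D.gradUp f j x =
      ∑ l, D.Γc x k i l * pd f l x := by
    simp only [← D.sum_σ_mul_gradUp f x, Finset.mul_sum, Finset.sum_mul]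
    rw [Finset.sum_comm]
    refine Finset.sum_congr rfl fun l _ => Finset.sum_congr rfl fun j _ => ?_
    rw [D.σ_symm x j l]
    ring
  have reordered : ∑ j, (∑ l, D.σ x i l * D.Γc x k j l) * D.gradUp f j x =
      ∑ l, D.σ x i l * ∑ j, D.Γc x k j l * D.gradUp f j x := by
    simp only [Finset.mul_sum, Finset.sum_mul]
    rw [Finset.sum_comm]
    exact Finset.sum_congr rfl fun l _ => Finset.sum_congr rfl fun j _ => by ring
  simp only [pd_σ, add_mul, Finset.sum_add_distrib, lowered, reordered]

-- Differentiating `σ_{ji} f^i = f_j` rather than `f^i = σ^{ij} f_j` avoids derivatives of `σ^{ij}`.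
lemma pd_gradUp_add_sum_Γc (hf : ContDiffAt ℝ 2 f x) (i k : Fin n) :
    pd (D.gradUp f i) k x + ∑ l, D.Γc x k l i * D.gradUp f l x =
      ∑ j, D.σInv x i j * D.hess f k j x := by
  have lowered (j : Fin n) : ∑ i, D.σ x j i *
      (pd (D.gradUp f i) k x + ∑ l, D.Γc x k l i * D.gradUp f l x) = D.hess f k j x := by
    have product_rule : pd (pd f j) k x =
        ∑ i, pd (fun y => D.σ y j i) k x * D.gradUp f i x +
          ∑ i, D.σ x j i * pd (D.gradUp f i) k x := by
      have h : pd f j = fun y => ∑ i, D.σ y j i * D.gradUp f i y :=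
        funext fun y => (D.sum_σ_mul_gradUp f y j).symm
      rw [h, pd_sum_mul (fun i => D.differentiable_σ j i x) (D.differentiableAt_gradUp hf),
        Finset.sum_add_distrib]
    rw [hess, product_rule, sum_pd_σ_mul_gradUp]
    simp only [mul_add, Finset.sum_add_distrib]
    ring
  simp only [← lowered, sum_σInv_mul_sum_σ_mul]

lemma divP_gradUp (hf : ContDiffAt ℝ 2 f x) :
    D.divP (D.gradUp f) x = ∑ i, ∑ j, D.σInv x i j * D.hess f i j x :=
  Finset.sum_congr rfl fun i _ => D.pd_gradUp_add_sum_Γc hf i i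

lemma differentiableAt_gradSq (hf : ContDiffAt ℝ 2 f x) : DifferentiableAt ℝ (D.gradSq f) x := by
  rw [funext (D.gradSq_eq_sum_pd_mul_gradUp f)]
  exact .fun_sum fun i _ => (differentiableAt_pd hf i).fun_mul (D.differentiableAt_gradUp hf i)

lemma pd_gradSq (hf : ContDiffAt ℝ 2 f x) (k : Fin n) :
    pd (D.gradSq f) k x = 2 * ∑ j, D.hess f k j x * D.gradUp f j x := by
  have hpd := differentiableAt_pd hf
  have hgrad := D.differentiableAt_gradUp hf
  have product_rule : pd (D.gradSq f) k x =
      ∑ i, (pd (pd f i) k x * D.gradUp f i x + pd f i x * pd (D.gradUp f i) k x) := by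
    rw [funext (D.gradSq_eq_sum_pd_mul_gradUp f), pd_sum_mul hpd hgrad]
  have pd_pd (i : Fin n) : pd (pd f i) k x = D.hess f k i x + ∑ l, D.Γc x k i l * pd f l x :=
    (sub_add_cancel _ _).symm
  have pd_gradUp (i : Fin n) := eq_sub_of_add_eq (D.pd_gradUp_add_sum_Γc hf i k)
  have raised : ∑ i, pd f i x * ∑ j, D.σInv x i j * D.hess f k j x =
      ∑ j, D.hess f k j x * D.gradUp f j x :=
    D.sum_mul_sum_σInv_mul_comm x _ _
  have connection_terms : ∑ i, pd f i x * ∑ l, D.Γc x k l i * D.gradUp f l x =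
      ∑ i, (∑ l, D.Γc x k i l * pd f l x) * D.gradUp f i x := by
    simp only [Finset.mul_sum, Finset.sum_mul]
    rw [Finset.sum_comm]
    exact Finset.sum_congr rfl fun i _ => Finset.sum_congr rfl fun l _ => by ring
  simp only [product_rule, pd_pd, pd_gradUp, add_mul, mul_sub, Finset.sum_add_distrib,
    Finset.sum_sub_distrib, raised, connection_terms]
  ring

end LeviCivita

section WarpedProduct

@[simp] lemma vComp_zero (v : ℝ × (Fin n → ℝ)) : vComp v 0 = v.1 := rfl

@[simp] lemma vComp_succ (v : ℝ × (Fin n → ℝ)) (i : Fin n) : vComp v i.succ = v.2 i := rfl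

@[simp] lemma ambPd_zero : ambPd f 0 x = 0 := rfl

@[simp] lemma ambPd_succ (i : Fin n) : ambPd f i.succ x = pd f i x := rfl

@[simp] lemma ambG_zero_zero : D.ambG x 0 0 = 1 / D.γ x := rfl

@[simp] lemma ambG_zero_succ (i : Fin n) : D.ambG x 0 i.succ = 0 := rfl

@[simp] lemma ambG_succ_zero (i : Fin n) : D.ambG x i.succ 0 = 0 := rfl

@[simp] lemma ambG_succ_succ (i j : Fin n) : D.ambG x i.succ j.succ = D.σ x i j := rfl

@[simp] lemma ambGInv_zero_zero : D.ambGInv x 0 0 = D.γ x := rfl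

@[simp] lemma ambGInv_zero_succ (i : Fin n) : D.ambGInv x 0 i.succ = 0 := rfl

@[simp] lemma ambGInv_succ_zero (i : Fin n) : D.ambGInv x i.succ 0 = 0 := rfl

@[simp] lemma ambGInv_succ_succ (i j : Fin n) : D.ambGInv x i.succ j.succ = D.σInv x i j := rfl

lemma ambInner_eq (v w : ℝ × (Fin n → ℝ)) :
    D.ambInner x v w = v.1 * w.1 / D.γ x + ∑ i, ∑ j, D.σ x i j * v.2 i * w.2 j := by
  simp only [ambInner, Fin.sum_univ_succ, vComp_zero, vComp_succ, ambG_zero_zero, ambG_zero_succ,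
    ambG_succ_zero, ambG_succ_succ, zero_mul, Finset.sum_const_zero, add_zero, zero_add]
  ring

lemma ambInner_normalN (v : ℝ × (Fin n → ℝ)) :
    D.ambInner x v (D.normalN f x) = (v.1 - ∑ i, pd f i x * v.2 i) / D.Wf f x := by
  have hγ := (D.γ_pos x).ne'
  have horizontal : ∑ i, ∑ j, D.σ x i j * v.2 i * (-D.gradUp f j x / D.Wf f x) =
      -(∑ i, pd f i x * v.2 i) / D.Wf f x := by
    simp only [← D.sum_σ_mul_gradUp f x, Finset.sum_mul, ← Finset.sum_neg_distrib, Finset.sum_div]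
    exact Finset.sum_congr rfl fun i _ => Finset.sum_congr rfl fun j _ => by ring
  rw [ambInner_eq, normalN, horizontal]
  field_simp
  ring

lemma pd_one_div_γ (i : Fin n) : pd (fun y => 1 / D.γ y) i x = -(pd D.γ i x / D.γ x ^ 2) := by
  rw [pd_div (differentiableAt_const 1) (D.differentiable_γ x) (D.γ_pos x).ne', pd_const]
  ring

lemma ambΓ_zero_zero_zero : D.ambΓ x 0 0 0 = 0 := by
  simp [ambΓ, Fin.sum_univ_succ]

lemma ambΓ_zero_zero_succ (i : Fin n) : D.ambΓ x 0 0 i.succ = -(pd D.γ i x / (2 * D.γ x)) := by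
  have hγ := (D.γ_pos x).ne'
  simp only [ambΓ, Fin.sum_univ_succ, ambGInv_zero_zero, ambGInv_zero_succ, ambG_zero_zero,
    ambPd_zero, ambPd_succ, pd_one_div_γ, zero_mul, Finset.sum_const_zero]
  field_simp
  ring

lemma ambΓ_zero_succ_zero (i : Fin n) : D.ambΓ x 0 i.succ 0 = -(pd D.γ i x / (2 * D.γ x)) := by
  rw [← ambΓ_zero_zero_succ]
  simp [ambΓ, Fin.sum_univ_succ]

lemma ambΓ_zero_succ_succ (i j : Fin n) : D.ambΓ x 0 i.succ j.succ = 0 := by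
  simp [ambΓ, Fin.sum_univ_succ, pd_const]

lemma ambΓ_succ_zero_zero (k : Fin n) :
    D.ambΓ x k.succ 0 0 = D.gradUp D.γ k x / (2 * D.γ x ^ 2) := by
  simp only [ambΓ, Fin.sum_univ_succ, ambGInv_succ_zero, ambGInv_succ_succ, ambG_zero_zero,
    ambPd_zero, ambPd_succ, pd_one_div_γ, gradUp, Finset.sum_div, Finset.mul_sum,
    zero_mul, zero_add]
  exact Finset.sum_congr rfl fun j _ => by ring

lemma ambΓ_succ_zero_succ (k i : Fin n) : D.ambΓ x k.succ 0 i.succ = 0 := by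
  simp [ambΓ, Fin.sum_univ_succ, pd_const]

lemma ambΓ_succ_succ_zero (k i : Fin n) : D.ambΓ x k.succ i.succ 0 = 0 := by
  simp [ambΓ, Fin.sum_univ_succ, pd_const]

lemma ambΓ_succ_succ_succ (k i j : Fin n) : D.ambΓ x k.succ i.succ j.succ = D.Γc x i j k := by
  simp [ambΓ, Γc, Fin.sum_univ_succ, add_comm]

lemma sum_ambΓ_zero (v w : ℝ × (Fin n → ℝ)) :
    ∑ b, ∑ c, D.ambΓ x 0 b c * vComp v b * vComp w c =
      -(v.1 * ∑ i, pd D.γ i x * w.2 i + w.1 * ∑ i, pd D.γ i x * v.2 i) / (2 * D.γ x) := by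
  simp only [Fin.sum_univ_succ, ambΓ_zero_zero_zero, ambΓ_zero_zero_succ, ambΓ_zero_succ_zero,
    ambΓ_zero_succ_succ, vComp_zero, vComp_succ, zero_mul, zero_add, Finset.sum_const_zero,
    add_zero, Finset.mul_sum, neg_add, add_div, ← Finset.sum_neg_distrib, Finset.sum_div]
  congr 1 <;> exact Finset.sum_congr rfl fun i _ => by ring

lemma sum_ambΓ_succ (k : Fin n) (v w : ℝ × (Fin n → ℝ)) :
    ∑ b, ∑ c, D.ambΓ x k.succ b c * vComp v b * vComp w c =
      D.gradUp D.γ k x / (2 * D.γ x ^ 2) * v.1 * w.1 +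
        ∑ i, ∑ j, D.Γc x i j k * v.2 i * w.2 j := by
  simp [Fin.sum_univ_succ, ambΓ_succ_zero_zero, ambΓ_succ_zero_succ, ambΓ_succ_succ_zero,
    ambΓ_succ_succ_succ]

end WarpedProduct

section KillingGraph

lemma ambCov_tangentV (i j : Fin n) :
    D.ambCov (tangentV f j) (tangentV f i x) x =
      (pd (pd f j) i x - (pd D.γ i x * pd f j x + pd D.γ j x * pd f i x) / (2 * D.γ x),
        fun k => D.Γc x i j k + D.gradUp D.γ k x * (pd f i x * pd f j x) / (2 * D.γ x ^ 2)) := by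
  ext k
  · simp only [ambCov, tangentV, sum_ambΓ_zero, Pi.single_apply, ite_mul, mul_ite, one_mul, mul_one,
      zero_mul, mul_zero, Finset.sum_ite_eq', Finset.mem_univ, if_true]
    ring
  · simp only [ambCov, tangentV, sum_ambΓ_succ, pd_const, Pi.single_apply, ite_mul, mul_ite,
      one_mul, mul_one, zero_mul, mul_zero, Finset.sum_ite_eq', Finset.mem_univ, if_true,
      Finset.sum_const_zero, zero_add]
    ring

lemma sff_eq (i j : Fin n) :
    D.sff f i j x =
      (D.hess f i j x - (pd D.γ i x * pd f j x + pd D.γ j x * pd f i x) / (2 * D.γ x)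
        - D.inner2 D.γ f x * (pd f i x * pd f j x) / (2 * D.γ x ^ 2)) / D.Wf f x := by
  have horizontal : ∑ k, pd f k x *
      (D.Γc x i j k + D.gradUp D.γ k x * (pd f i x * pd f j x) / (2 * D.γ x ^ 2)) =
      ∑ k, D.Γc x i j k * pd f k x
        + D.inner2 D.γ f x * (pd f i x * pd f j x) / (2 * D.γ x ^ 2) := by
    rw [D.inner2_comm, inner2_eq_sum_pd_mul_gradUp, Finset.sum_mul, Finset.sum_div,
      ← Finset.sum_add_distrib]
    exact Finset.sum_congr rfl fun k _ => by ring
  rw [sff, ambCov_tangentV, ambInner_normalN, horizontal, hess]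
  ring

lemma gInv_symm (i j : Fin n) : D.gInv f x i j = D.gInv f x j i := by
  rw [gInv, gInv, D.σInv_symm x i j, mul_comm (D.gradUp f i x)]

lemma sum_gInv_mul_pd (i : Fin n) :
    ∑ j, D.gInv f x i j * pd f j x = D.γ x / D.Wf f x ^ 2 * D.gradUp f i x := by
  have hW := (D.Wf_pos f x).ne'
  calc ∑ j, D.gInv f x i j * pd f j x
      = D.gradUp f i x - D.gradUp f i x * D.gradSq f x / D.Wf f x ^ 2 := by
        rw [gradSq_eq_sum_pd_mul_gradUp, Finset.mul_sum, Finset.sum_div, gradUp,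
          ← Finset.sum_sub_distrib]
        exact Finset.sum_congr rfl fun j _ => by rw [gInv, gradUp]; ring
    _ = D.γ x / D.Wf f x ^ 2 * D.gradUp f i x := by
        field_simp
        rw [Wf_sq]
        ring

lemma sum_gInv_mul_pd_mul_pd :
    ∑ i, ∑ j, D.gInv f x i j * (pd g i x * pd f j x) =
      D.γ x / D.Wf f x ^ 2 * D.inner2 g f x := by
  rw [inner2_eq_sum_pd_mul_gradUp, Finset.mul_sum]
  refine Finset.sum_congr rfl fun i _ => ?_
  rw [mul_left_comm, ← sum_gInv_mul_pd, Finset.mul_sum]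
  exact Finset.sum_congr rfl fun j _ => by ring

lemma Wf_mul_nH :
    D.Wf f x * D.nH f x = ∑ i, ∑ j, D.gInv f x i j * D.hess f i j x -
      (2 * D.γ x + D.gradSq f x) / D.Wf f x ^ 2 * (D.inner2 D.γ f x / (2 * D.γ x)) := by
  have hγ := (D.γ_pos x).ne'
  have hW := (D.Wf_pos f x).ne'
  have swapped : ∑ i, ∑ j, D.gInv f x i j * (pd D.γ j x * pd f i x) =
      ∑ i, ∑ j, D.gInv f x i j * (pd D.γ i x * pd f j x) := by
    rw [Finset.sum_comm]
    simp only [D.gInv_symm f x]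
  calc D.Wf f x * D.nH f x
      = ∑ i, ∑ j, D.gInv f x i j * D.hess f i j x
          - (∑ i, ∑ j, D.gInv f x i j * (pd D.γ i x * pd f j x)
            + ∑ i, ∑ j, D.gInv f x i j * (pd D.γ j x * pd f i x)) / (2 * D.γ x)
          - D.inner2 D.γ f x * (∑ i, ∑ j, D.gInv f x i j * (pd f i x * pd f j x))
            / (2 * D.γ x ^ 2) := by
        simp only [nH, sff_eq, Finset.mul_sum, Finset.sum_div, ← Finset.sum_add_distrib,
          ← Finset.sum_sub_distrib]
        refine Finset.sum_congr rfl fun i _ => Finset.sum_congr rfl fun j _ => ?_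
        field_simp
    _ = ∑ i, ∑ j, D.gInv f x i j * D.hess f i j x -
          (2 * D.γ x + D.gradSq f x) / D.Wf f x ^ 2 * (D.inner2 D.γ f x / (2 * D.γ x)) := by
        rw [swapped, sum_gInv_mul_pd_mul_pd, sum_gInv_mul_pd_mul_pd, ← gradSq]
        field_simp
        ring

lemma divP_div {Z : Fin n → (Fin n → ℝ) → ℝ} {φ : (Fin n → ℝ) → ℝ} {x : Fin n → ℝ}
    (hZ : ∀ i, DifferentiableAt ℝ (Z i) x) (hφ : DifferentiableAt ℝ φ x) (hφx : φ x ≠ 0) :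
    D.divP (fun i y => Z i y / φ y) x = D.divP Z x / φ x - (∑ i, pd φ i x * Z i x) / φ x ^ 2 := by
  simp only [divP, Finset.sum_div, ← Finset.sum_sub_distrib, pd_div (hZ _) hφ hφx, add_div,
    mul_div_assoc]
  exact Finset.sum_congr rfl fun i _ => by ring

variable {f x}

lemma differentiableAt_Wf (hf : ContDiffAt ℝ 2 f x) : DifferentiableAt ℝ (D.Wf f) x :=
  ((D.differentiable_γ x).fun_add (D.differentiableAt_gradSq hf)).sqrt (D.γ_add_gradSq_pos f x).ne'

lemma pd_Wf (hf : ContDiffAt ℝ 2 f x) (k : Fin n) :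
    pd (D.Wf f) k x =
      (pd D.γ k x + 2 * ∑ j, D.hess f k j x * D.gradUp f j x) / (2 * D.Wf f x) := by
  have hγ := D.differentiable_γ x
  have hgradSq := D.differentiableAt_gradSq hf
  rw [← pd_gradSq D hf, ← pd_add hγ hgradSq]
  exact pd_sqrt (hγ.fun_add hgradSq) (D.γ_add_gradSq_pos f x).ne' k

lemma sum_gInv_mul_hess :
    ∑ i, ∑ j, D.gInv f x i j * D.hess f i j x = ∑ i, ∑ j, D.σInv x i j * D.hess f i j x -
      (∑ i, (∑ j, D.hess f i j x * D.gradUp f j x) * D.gradUp f i x) / D.Wf f x ^ 2 := by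
  simp only [gInv, Finset.sum_mul, Finset.sum_div, ← Finset.sum_sub_distrib]
  exact Finset.sum_congr rfl fun i _ => Finset.sum_congr rfl fun j _ => by ring

lemma Wf_mul_divP_gradUp_div_Wf (hf : ContDiffAt ℝ 2 f x) :
    D.Wf f x * D.divP (fun i y => D.gradUp f i y / D.Wf f y) x =
      ∑ i, ∑ j, D.gInv f x i j * D.hess f i j x - D.inner2 D.γ f x / (2 * D.Wf f x ^ 2) := by
  have hW := (D.Wf_pos f x).ne'
  have gradUp_Wf : ∑ i, pd (D.Wf f) i x * D.gradUp f i x =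
      (D.inner2 D.γ f x + 2 * ∑ i, (∑ j, D.hess f i j x * D.gradUp f j x) * D.gradUp f i x)
        / (2 * D.Wf f x) := by
    rw [inner2_eq_sum_pd_mul_gradUp, Finset.mul_sum, ← Finset.sum_add_distrib, Finset.sum_div]
    refine Finset.sum_congr rfl fun i _ => ?_
    rw [D.pd_Wf hf]
    ring
  rw [D.divP_div (D.differentiableAt_gradUp hf) (D.differentiableAt_Wf hf) hW, D.divP_gradUp hf,
    gradUp_Wf, sum_gInv_mul_hess]
  field_simp
  ring

lemma Wf_mul_nH_eq_divP (hf : ContDiffAt ℝ 2 f x) :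
    D.Wf f x * D.nH f x =
      D.Wf f x * D.divP (fun i y => D.gradUp f i y / D.Wf f y) x -
        D.γ x * (D.inner2 D.γ f x / (2 * D.γ x ^ 2)) := by
  have hγ := (D.γ_pos x).ne'
  have hW := (D.Wf_pos f x).ne'
  have hgradSq : D.gradSq f x = D.Wf f x ^ 2 - D.γ x := by rw [Wf_sq, add_sub_cancel_left]
  rw [Wf_mul_nH, D.Wf_mul_divP_gradUp_div_Wf hf, hgradSq]
  field_simp
  ring

lemma ambInner_vertical_normalN (s : ℝ) :
    D.ambInner x (s, 0) (D.normalN f x) = s / D.Wf f x := by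
  simp [ambInner_normalN]

lemma ambInner_vertical_normalN_eq_iff (s h : ℝ) :
    D.ambInner x (s, 0) (D.normalN f x) = D.nH f x - h ↔
      s = D.Wf f x * D.nH f x - D.Wf f x * h := by
  rw [ambInner_vertical_normalN, div_eq_iff (D.Wf_pos f x).ne', ← mul_sub, mul_comm]

end KillingGraph

end LeafData

theorem flow_iff_nonparametric_equation_general
    {n : ℕ} (D : LeafData n) {Ω : Set (Fin n → ℝ)} {J : Set ℝ} (𝓗 : (Fin n → ℝ) → ℝ)
    {u u' : (Fin n → ℝ) → ℝ → ℝ}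
    (hu : ∀ x ∈ Ω, ∀ t ∈ J, ContDiffAt ℝ 2 (fun y => u y t) x)
    (hu' : ∀ x ∈ Ω, ∀ t ∈ J, HasDerivAt (u x) (u' x t) t) :
    ((∀ x ∈ Ω, ∀ t ∈ J, D.ambInner x (u' x t, (0 : Fin n → ℝ)) (D.normalN (fun y => u y t) x) =
            D.nH (fun y => u y t) x - 𝓗 x) ↔
        D.SolvesFlowDivOn Ω J 𝓗 u) ∧
      (D.SolvesFlowDivOn Ω J 𝓗 u ↔
        (∀ x ∈ Ω, ∀ t ∈ J,
          u' x t =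
            (∑ i, ∑ j, D.gInv (fun y => u y t) x i j * D.hess (fun y => u y t) i j x) -
              (2 * D.γ x + D.gradSq (fun y => u y t) x) / (D.Wf (fun y => u y t) x) ^ 2 *
                (D.inner2 D.γ (fun y => u y t) x / (2 * D.γ x)) -
              D.Wf (fun y => u y t) x * 𝓗 x)) ∧
      ((∀ x ∈ Ω, ∀ t ∈ J, D.ambInner x (u' x t, (0 : Fin n → ℝ)) (D.normalN (fun y => u y t) x) =
            D.nH (fun y => u y t) x - 𝓗 x) →
        ∀ x ∈ Ω, ∀ t ∈ J,
          D.nH (fun y => u y t) x - 𝓗 x = u' x t / D.Wf (fun y => u y t) x) := by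
  have divergence_form_iff : D.SolvesFlowDivOn Ω J 𝓗 u ↔ ∀ x ∈ Ω, ∀ t ∈ J, u' x t =
      D.Wf (fun y => u y t) x * D.nH (fun y => u y t) x - D.Wf (fun y => u y t) x * 𝓗 x := by
    refine forall₄_congr fun x hx t ht => ?_
    rw [(hu' x hx t ht).deriv, D.Wf_mul_nH_eq_divP (hu x hx t ht), sub_right_comm]
  refine ⟨?_, ?_, fun hflow x hx t ht => ?_⟩
  · simp only [divergence_form_iff, ambInner_vertical_normalN_eq_iff]
  · simp only [divergence_form_iff, Wf_mul_nH]
  · rw [← hflow x hx t ht, ambInner_vertical_normalN]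

/-- A family of Killing graphs `X(t,x) = ϑ(u(x,t),x)` evolves
by the flow `∂X/∂t = (nH − 𝓗)N` (normal speed `⟨∂X/∂t, N⟩ = nH − 𝓗`, with
`∂X/∂t = u_t Y`) if and only if `u` satisfies the quasilinear parabolic
equation (21), equivalently (22); and along the flow
`nH − 𝓗 = ⟨∂X/∂t, N⟩ = (1/W) ∂u/∂t`. -/
theorem flow_iff_nonparametric_equation
    {n : ℕ} (D : LeafData n) (Ω : Set (Fin n → ℝ))
    (hΩo : IsOpen Ω) (hΩb : Bornology.IsBounded Ω)
    (T : ℝ) (hT : 0 < T) (𝓗 : (Fin n → ℝ) → ℝ) (h𝓗 : ContDiff ℝ (⊤ : ℕ∞) 𝓗)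
    (u : (Fin n → ℝ) → ℝ → ℝ)
    (hu : ContDiff ℝ (⊤ : ℕ∞) fun p : (Fin n → ℝ) × ℝ => u p.1 p.2) :
    ((∀ x ∈ Ω, ∀ t ∈ Set.Ico (0 : ℝ) T,
          D.ambInner x (deriv (u x) t, (0 : Fin n → ℝ))
              (D.normalN (fun y => u y t) x) =
            D.nH (fun y => u y t) x - 𝓗 x) ↔
        D.SolvesFlowDivOn Ω (Set.Ico (0 : ℝ) T) 𝓗 u) ∧
      (D.SolvesFlowDivOn Ω (Set.Ico (0 : ℝ) T) 𝓗 u ↔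
        (∀ x ∈ Ω, ∀ t ∈ Set.Ico (0 : ℝ) T,
          deriv (u x) t =
            (∑ i, ∑ j, D.gInv (fun y => u y t) x i j *
                D.hess (fun y => u y t) i j x) -
              (2 * D.γ x + D.gradSq (fun y => u y t) x) /
                  (D.Wf (fun y => u y t) x) ^ 2 *
                (D.inner2 D.γ (fun y => u y t) x / (2 * D.γ x)) -
              D.Wf (fun y => u y t) x * 𝓗 x)) ∧
      ((∀ x ∈ Ω, ∀ t ∈ Set.Ico (0 : ℝ) T,
          D.ambInner x (deriv (u x) t, (0 : Fin n → ℝ))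
              (D.normalN (fun y => u y t) x) =
            D.nH (fun y => u y t) x - 𝓗 x) →
        ∀ x ∈ Ω, ∀ t ∈ Set.Ico (0 : ℝ) T,
          D.nH (fun y => u y t) x - 𝓗 x =
            deriv (u x) t / D.Wf (fun y => u y t) x) :=
  flow_iff_nonparametric_equation_general D 𝓗
    (fun _ _ _ _ => ((contDiff_infty.1 hu 2).comp (contDiff_prodMk_left _)).contDiffAt)
    (fun _ _ _ _ =>
      ((hu.comp (contDiff_prodMk_right _)).differentiable (by simp) _).hasDerivAt)

end KMCF
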